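/- Let Φ be a Young function satisfying the ∇2-condition. Then the Hardy–Littlewood maximal operator is of strong (Φ,Φ)-type: there exists C > 0 such that ∫_{ℝⁿ} Φ(Mf(x)) dx ≤ ∫_{ℝⁿ} Φ(C|f(x)|) dx for all f ∈ L^Φ(ℝⁿ), and consequently ‖Mf‖_{L^Φ(ℝⁿ)} ≤ C‖f‖_{L^Φ(ℝⁿ)}. -/

import Mathlib

open MeasureTheory

/-- The Hardy–Littlewood maximal operator on ℝⁿ. -/
noncomputable def hlMaximal {n : ℕ} (f : EuclideanSpace ℝ (Fin n) → ℝ)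
    (x : EuclideanSpace ℝ (Fin n)) : ℝ :=
  ⨆ r : {r : ℝ // 0 < r},
    (volume (Metric.ball x r.1)).toReal⁻¹ * ∫ z in Metric.ball x r.1, |f z|

/-- Membership in the Orlicz space L^Φ(ℝⁿ). -/
def MemOrlicz {n : ℕ} (Φ : ℝ → ℝ) (f : EuclideanSpace ℝ (Fin n) → ℝ) : Prop :=
  ∃ lam : ℝ, 0 < lam ∧ ∫⁻ x, ENNReal.ofReal (Φ (|f x| / lam)) < ⊤

/-- The Luxemburg norm on L^Φ(ℝⁿ). -/
noncomputable def luxNorm {n : ℕ} (Φ : ℝ → ℝ)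
    (f : EuclideanSpace ℝ (Fin n) → ℝ) : ℝ :=
  sInf {lam : ℝ | 0 < lam ∧ ∫⁻ x, ENNReal.ofReal (Φ (|f x| / lam)) ≤ 1}

open Metric Set

/-- Weak type `(1,1)` estimate: the set of centres of balls on which the average of `h` is at least
`s` has measure at most `5 ^ n * s⁻¹ * ∫⁻ h`. -/
lemma mul_volume_setOf_exists_ball_le {n : ℕ} (h : EuclideanSpace ℝ (Fin n) → ENNReal)
    (s : ENNReal) :
    s * volume {x | ∃ r : ℝ, 0 < r ∧ s * volume (ball x r) ≤ ∫⁻ z in ball x r, h z}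
      ≤ ENNReal.ofReal (5 ^ n) * ∫⁻ z, h z := by
  set A : ℕ → Set (EuclideanSpace ℝ (Fin n)) := fun N =>
    {x | ∃ r : ℝ, 0 < r ∧ r ≤ N ∧ s * volume (ball x r) ≤ ∫⁻ z in ball x r, h z} with hA
  have hunion : {x | ∃ r : ℝ, 0 < r ∧ s * volume (ball x r) ≤ ∫⁻ z in ball x r, h z}
      = ⋃ N, A N := by
    ext x
    simp only [hA, mem_ofPred_eq, mem_iUnion]
    constructor
    · rintro ⟨r, hr, hx⟩
      obtain ⟨N, hN⟩ := exists_nat_ge r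
      exact ⟨N, r, hr, hN, hx⟩
    · rintro ⟨N, r, hr, -, hx⟩
      exact ⟨r, hr, hx⟩
  have hmonoA : Monotone A := by
    rintro N N' hNN x ⟨r, hr, hrN, hx⟩
    exact ⟨r, hr, hrN.trans (by exact_mod_cast hNN), hx⟩
  rw [hunion, hmonoA.measure_iUnion, ENNReal.mul_iSup]
  refine iSup_le fun N => ?_
  choose! r hr hrN hx using fun x (hx : x ∈ A N) => hx
  obtain ⟨u, huA, hdisj, hcov⟩ := Vitali.exists_disjoint_subfamily_covering_enlargement_closedBall
    (A N) id r N hrN 4 (by norm_num)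
  simp only [id] at hdisj hcov
  have hcount : u.Countable := hdisj.countable_of_nonempty_interior fun b hb =>
    (nonempty_ball.2 (hr b (huA hb))).mono ball_subset_interior_closedBall
  have hsub : A N ⊆ ⋃ b ∈ u, ball b (5 * r b) := by
    intro a ha
    obtain ⟨b, hb, hab⟩ := hcov a ha
    refine mem_biUnion hb ?_
    have hb0 := hr b (huA hb)
    exact closedBall_subset_ball (by linarith) (hab (mem_closedBall_self (hr a ha).le))
  have hvol (b : EuclideanSpace ℝ (Fin n)) :
      volume (ball b (5 * r b)) = ENNReal.ofReal (5 ^ n) * volume (ball b (r b)) := by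
    rw [Measure.addHaar_ball_mul_of_pos volume b (by norm_num), finrank_euclideanSpace_fin,
      Measure.addHaar_ball_center volume b (r b)]
  calc s * volume (A N)
      ≤ s * ∑' b : u, volume (ball (b : EuclideanSpace ℝ (Fin n)) (5 * r b)) := by
        gcongr
        exact (measure_mono hsub).trans (measure_biUnion_le _ hcount _)
    _ = ENNReal.ofReal (5 ^ n) *
          ∑' b : u, s * volume (ball (b : EuclideanSpace ℝ (Fin n)) (r b)) := by
        simp_rw [hvol, ENNReal.tsum_mul_left]
        ring
    _ ≤ ENNReal.ofReal (5 ^ n) *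
          ∑' b : u, ∫⁻ z in ball (b : EuclideanSpace ℝ (Fin n)) (r b), h z := by
        gcongr with b
        exact hx b (huA b.2)
    _ = ENNReal.ofReal (5 ^ n) * ∫⁻ z in ⋃ b ∈ u, ball b (r b), h z := by
        rw [lintegral_biUnion hcount (fun _ _ => measurableSet_ball)
          (hdisj.mono fun _ => ball_subset_closedBall)]
    _ ≤ ENNReal.ofReal (5 ^ n) * ∫⁻ z, h z := by
        gcongr
        exact Measure.restrict_le_self

/-- Weak type estimate with the function truncated at half the level. -/
lemma mul_volume_setOf_exists_ball_le_setLIntegral {n : ℕ}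
    {g : EuclideanSpace ℝ (Fin n) → ENNReal} (hg : Measurable g) {s : ENNReal} (hs : s ≠ ⊤) :
    s * volume {x | ∃ r : ℝ, 0 < r ∧ (s + s) * volume (ball x r) ≤ ∫⁻ z in ball x r, g z}
      ≤ ENNReal.ofReal (5 ^ n) * ∫⁻ z in {z | s < g z}, g z := by
  have hm : MeasurableSet {z | s < g z} := measurableSet_lt measurable_const hg
  rw [← lintegral_indicator hm]
  refine le_trans ?_ (mul_volume_setOf_exists_ball_le _ s)
  gcongr s * volume ?_
  rintro x ⟨r, hr, hx⟩
  refine ⟨r, hr, ?_⟩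
  have hfin : s * volume (ball x r) ≠ ⊤ := ENNReal.mul_ne_top hs measure_ball_lt_top.ne
  have hle : ∫⁻ z in ball x r, g z
      ≤ (∫⁻ z in ball x r, {z | s < g z}.indicator g z) + s * volume (ball x r) := by
    rw [← setLIntegral_const, ← lintegral_add_right _ measurable_const]
    refine lintegral_mono fun z => ?_
    by_cases hz : s < g z
    · simp [indicator, hz]
    · simp [indicator, hz, not_lt.1 hz]
  rw [add_mul] at hx
  exact (ENNReal.add_le_add_iff_right hfin).1 (hx.trans hle)

lemma hlMaximal_nonneg {n : ℕ} (f : EuclideanSpace ℝ (Fin n) → ℝ)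
    (x : EuclideanSpace ℝ (Fin n)) : 0 ≤ hlMaximal f x :=
  Real.iSup_nonneg fun _ => by positivity

lemma hlMaximal_const_mul {n : ℕ} (f : EuclideanSpace ℝ (Fin n) → ℝ) {c : ℝ} (hc : 0 ≤ c)
    (x : EuclideanSpace ℝ (Fin n)) : hlMaximal (fun z => c * f z) x = c * hlMaximal f x := by
  unfold hlMaximal
  rw [Real.mul_iSup_of_nonneg hc]
  congr 1
  ext r
  simp_rw [abs_mul, abs_of_nonneg hc, integral_const_mul]
  ring

lemma ofReal_integral_abs_le_lintegral {α : Type*} [MeasurableSpace α] (μ : Measure α)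
    (f : α → ℝ) : ENNReal.ofReal (∫ z, |f z| ∂μ) ≤ ∫⁻ z, ENNReal.ofReal |f z| ∂μ := by
  by_cases hf : Integrable (fun z => |f z|) μ
  · rw [ofReal_integral_eq_lintegral_ofReal hf (ae_of_all _ fun _ => abs_nonneg _)]
  · simp [integral_undef hf]

/-- A point where the maximal function exceeds `t` is the centre of a ball on which the average
of `|f|` is at least `t`. -/
lemma exists_ball_of_lt_hlMaximal {n : ℕ} {f : EuclideanSpace ℝ (Fin n) → ℝ}
    {x : EuclideanSpace ℝ (Fin n)} {t : ℝ} (ht : t < hlMaximal f x) :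
    ∃ r : ℝ, 0 < r ∧ ENNReal.ofReal t * volume (ball x r)
      ≤ ∫⁻ z in ball x r, ENNReal.ofReal |f z| := by
  by_contra! hcon
  have : Nonempty {r : ℝ // 0 < r} := ⟨⟨1, one_pos⟩⟩
  refine ht.not_ge (ciSup_le fun r => ?_)
  by_contra! hr
  refine (hcon r.1 r.2).not_ge (le_trans ?_ (ofReal_integral_abs_le_lintegral _ f))
  have hv0 : 0 < (volume (ball x r.1)).toReal :=
    ENNReal.toReal_pos (measure_ball_pos _ _ r.2).ne' measure_ball_lt_top.ne
  rw [← ENNReal.ofReal_toReal (measure_ball_lt_top (μ := volume) (x := x) (r := r.1)).ne,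
    ← ENNReal.ofReal_mul' hv0.le]
  refine ENNReal.ofReal_le_ofReal ?_
  rw [inv_mul_eq_div, lt_div_iff₀ hv0] at hr
  exact hr.le

lemma convexOn_apply_mul_le {Φ : ℝ → ℝ} (hΦ0 : Φ 0 = 0) (hconv : ConvexOn ℝ (Ici 0) Φ)
    {a t : ℝ} (ha0 : 0 ≤ a) (ha1 : a ≤ 1) (ht : 0 ≤ t) : Φ (a * t) ≤ a * Φ t := by
  have := hconv.2 (mem_Ici.2 ht) (mem_Ici.2 le_rfl) ha0 (sub_nonneg.2 ha1) (by ring)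
  simpa [hΦ0] using this

lemma mul_le_convexOn_apply_mul {Φ : ℝ → ℝ} (hΦ0 : Φ 0 = 0) (hconv : ConvexOn ℝ (Ici 0) Φ)
    {a t : ℝ} (ha : 1 ≤ a) (ht : 0 ≤ t) : a * Φ t ≤ Φ (a * t) := by
  have ha0 : 0 < a := by linarith
  have := convexOn_apply_mul_le hΦ0 hconv (inv_nonneg.2 ha0.le) (inv_le_one_of_one_le₀ ha)
    (mul_nonneg ha0.le ht)
  rwa [inv_mul_cancel_left₀ ha0.ne', inv_mul_eq_div, le_div_iff₀ ha0, mul_comm] at this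

lemma convexOn_div_le_div {Φ : ℝ → ℝ} (hΦ0 : Φ 0 = 0) (hconv : ConvexOn ℝ (Ici 0) Φ)
    {s t : ℝ} (hs : 0 < s) (hst : s ≤ t) : Φ s / s ≤ Φ t / t := by
  have ht : 0 < t := hs.trans_le hst
  have := mul_le_convexOn_apply_mul hΦ0 hconv ((one_le_div hs).2 hst) hs.le
  rw [div_mul_cancel₀ _ hs.ne'] at this
  rw [le_div_iff₀ ht]
  calc Φ s / s * t = t / s * Φ s := by ring
    _ ≤ Φ t := this

/-- Geometric decay of `Φ t / t` along the powers of the constant in the `∇₂`-condition. -/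
lemma div_zpow_le_of_nabla_two {Φ : ℝ → ℝ} {l : ℝ} (hl : 1 < l)
    (hnabla2 : ∀ t > 0, 2 * l * Φ t ≤ Φ (l * t)) (m : ℤ) (j : ℕ) :
    Φ (l ^ (m - j)) / l ^ (m - j) ≤ (1 / 2) ^ j * (Φ (l ^ m) / l ^ m) := by
  have hl0 : 0 < l := by linarith
  induction j with
  | zero => simp
  | succ j ih =>
    have hp : 0 < l ^ (m - (j + 1 : ℕ)) := zpow_pos hl0 _
    have heq : l ^ (m - (j : ℤ)) = l * l ^ (m - (j + 1 : ℕ)) := by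
      rw [← zpow_one_add₀ hl0.ne']
      congr 1
      push_cast
      ring
    have h2 := hnabla2 _ hp
    rw [heq] at ih
    have h3 : 2 * (Φ (l ^ (m - (j + 1 : ℕ))) / l ^ (m - (j + 1 : ℕ)))
        ≤ Φ (l * l ^ (m - (j + 1 : ℕ))) / (l * l ^ (m - (j + 1 : ℕ))) := by
      rw [le_div_iff₀ (mul_pos hl0 hp)]
      calc _ = 2 * l * Φ (l ^ (m - (j + 1 : ℕ))) := by field_simp
        _ ≤ _ := h2
    rw [pow_succ]
    linarith

/-- Discrete Hardy-type inequality for a Young function with the `∇₂`-condition. -/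
lemma tsum_zpow_le_of_nabla_two {Φ : ℝ → ℝ} (hΦ0 : Φ 0 = 0)
    (hconv : ConvexOn ℝ (Ici 0) Φ) {l : ℝ} (hl : 1 < l)
    (hnabla2 : ∀ t > 0, 2 * l * Φ t ≤ Φ (l * t)) {t : ℝ} (ht : 0 < t) :
    ∑' k : ℤ, (if l ^ k < t then ENNReal.ofReal (Φ (l ^ (k + 1)) / l ^ k) else 0)
      ≤ ENNReal.ofReal (2 * Φ (l * t) / t) := by
  have hl0 : 0 < l := by linarith
  obtain ⟨K, hK, hK'⟩ := exists_mem_Ioc_zpow ht hl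
  have hinj : Function.Injective fun j : ℕ => K - (j : ℤ) := fun i j hij => by
    simpa using hij
  rw [← hinj.tsum_eq]
  swap
  · intro k hk
    have hkt : l ^ k < t := by
      by_contra h
      simp [h] at hk
    have hkK : k < K + 1 := (zpow_lt_zpow_iff_right₀ hl).1 (hkt.trans_le hK')
    exact ⟨(K - k).toNat, by simp only; omega⟩
  have hterm (j : ℕ) : (if l ^ (K - (j : ℤ)) < t then
        ENNReal.ofReal (Φ (l ^ (K - (j : ℤ) + 1)) / l ^ (K - (j : ℤ))) else 0)
      ≤ (2⁻¹ : ENNReal) ^ j * ENNReal.ofReal (Φ (l * t) / t) := by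
    have hhalf : (2⁻¹ : ENNReal) ^ j = ENNReal.ofReal ((1 / 2) ^ j) := by
      rw [ENNReal.ofReal_pow (by norm_num), one_div, ENNReal.ofReal_inv_of_pos two_pos]
      simp
    rw [hhalf, ← ENNReal.ofReal_mul (by positivity)]
    split_ifs
    swap
    · exact zero_le
    refine ENNReal.ofReal_le_ofReal ?_
    have h1 := div_zpow_le_of_nabla_two hl hnabla2 (K + 1) j
    have h2 := convexOn_div_le_div hΦ0 hconv (zpow_pos hl0 (K + 1)) (t := l * t) (by
      rw [zpow_add_one₀ hl0.ne', mul_comm]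
      gcongr)
    rw [show K + 1 - (j : ℤ) = K - j + 1 by ring] at h1
    have h3 := h1.trans (mul_le_mul_of_nonneg_left h2 (by positivity))
    have h4 := mul_le_mul_of_nonneg_left h3 hl0.le
    rw [zpow_add_one₀ hl0.ne' (K - (j : ℤ))] at h4 ⊢
    calc _ = l * (Φ (l ^ (K - (j : ℤ)) * l) / (l ^ (K - (j : ℤ)) * l)) := by
          have := zpow_pos hl0 (K - (j : ℤ))
          field_simp
      _ ≤ _ := h4
      _ = _ := by field_simp
  refine (ENNReal.tsum_le_tsum hterm).trans ?_
  rw [ENNReal.tsum_mul_right, ENNReal.tsum_geometric, ENNReal.one_sub_inv_two, inv_inv,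
    mul_div_assoc, ENNReal.ofReal_mul two_pos.le]
  simp

/-- Pointwise dyadic bound for `Φ` by its values on the powers of `l`. -/
lemma ofReal_le_tsum_zpow {Φ : ℝ → ℝ} (hΦ0 : Φ 0 = 0) (hmono : MonotoneOn Φ (Ici 0)) {l : ℝ}
    (hl : 1 < l) {t : ℝ} (ht : 0 ≤ t) :
    ENNReal.ofReal (Φ t)
      ≤ ∑' k : ℤ, (if l ^ k < t then ENNReal.ofReal (Φ (l ^ (k + 1))) else 0) := by
  rcases ht.eq_or_lt with rfl | ht
  · simp [hΦ0]
  obtain ⟨K, hK, hK'⟩ := exists_mem_Ioc_zpow ht hl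
  refine le_trans ?_ (ENNReal.le_tsum K)
  rw [if_pos hK]
  exact ENNReal.ofReal_le_ofReal (hmono ht.le (ht.le.trans hK') hK')

/-- Modular strong type estimate for the maximal operator. -/
lemma lintegral_hlMaximal_le {n : ℕ} {Φ : ℝ → ℝ} (hΦ0 : Φ 0 = 0)
    (hnonneg : ∀ t, 0 ≤ t → 0 ≤ Φ t) (hmono : MonotoneOn Φ (Ici 0))
    (hconv : ConvexOn ℝ (Ici 0) Φ) {l : ℝ} (hl : 1 < l)
    (hnabla2 : ∀ t > 0, 2 * l * Φ t ≤ Φ (l * t)) (f : EuclideanSpace ℝ (Fin n) → ℝ) :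
    ∫⁻ x, ENNReal.ofReal (Φ (hlMaximal f x))
      ≤ ∫⁻ x, ENNReal.ofReal (Φ (4 * 5 ^ n * l * |f x|)) := by
  have hl0 : 0 < l := by linarith
  obtain ⟨g, hgm, hgf, hgint⟩ := exists_measurable_le_forall_setLIntegral_eq volume
    fun x => ENNReal.ofReal |f x|
  set E : ℤ → Set (EuclideanSpace ℝ (Fin n)) := fun k =>
    toMeasurable volume {x | l ^ k < hlMaximal f x} with hE
  have hEm (k : ℤ) : MeasurableSet (E k) := measurableSet_toMeasurable _ _
  have hSm (k : ℤ) : MeasurableSet {z | ENNReal.ofReal (l ^ k / 2) < g z} :=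
    measurableSet_lt measurable_const hgm
  have hvol (k : ℤ) : volume (E k) ≤ ENNReal.ofReal (2 * 5 ^ n / l ^ k) *
      ∫⁻ z in {z | ENNReal.ofReal (l ^ k / 2) < g z}, g z := by
    have hp : 0 < l ^ k := zpow_pos hl0 k
    have hw := mul_volume_setOf_exists_ball_le_setLIntegral hgm
      (s := ENNReal.ofReal (l ^ k / 2)) ENNReal.ofReal_ne_top
    rw [hE, measure_toMeasurable]
    have hsub : volume {x | l ^ k < hlMaximal f x} ≤ volume {x | ∃ r : ℝ, 0 < r ∧
        (ENNReal.ofReal (l ^ k / 2) + ENNReal.ofReal (l ^ k / 2)) * volume (ball x r)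
          ≤ ∫⁻ z in ball x r, g z} := by
      refine measure_mono fun x hx => ?_
      obtain ⟨r, hr, hxr⟩ := exists_ball_of_lt_hlMaximal hx
      refine ⟨r, hr, ?_⟩
      rwa [← ENNReal.ofReal_add (by positivity) (by positivity), add_halves, ← hgint]
    have hmul := (mul_le_mul_right hsub (ENNReal.ofReal (l ^ k / 2))).trans hw
    have hmul2 := mul_le_mul_right hmul (ENNReal.ofReal (2 / l ^ k))
    rw [← mul_assoc, ← mul_assoc, ← ENNReal.ofReal_mul (by positivity),
      ← ENNReal.ofReal_mul (by positivity)] at hmul2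
    rw [show 2 / l ^ k * (l ^ k / 2) = 1 by field_simp, ENNReal.ofReal_one, one_mul,
      div_mul_eq_mul_div] at hmul2
    exact hmul2
  calc ∫⁻ x, ENNReal.ofReal (Φ (hlMaximal f x))
      ≤ ∫⁻ x, ∑' k : ℤ, (E k).indicator (fun _ => ENNReal.ofReal (Φ (l ^ (k + 1)))) x := by
        refine lintegral_mono fun x => (ofReal_le_tsum_zpow hΦ0 hmono hl
          (hlMaximal_nonneg f x)).trans (ENNReal.tsum_le_tsum fun k => ?_)
        split_ifs with hk
        · have hxE : x ∈ E k := subset_toMeasurable _ _ hk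
          rw [indicator_of_mem hxE]
        · exact zero_le
    _ = ∑' k : ℤ, ENNReal.ofReal (Φ (l ^ (k + 1))) * volume (E k) := by
        rw [lintegral_tsum fun k => (measurable_const.indicator (hEm k)).aemeasurable]
        simp_rw [lintegral_indicator_const (hEm _)]
    _ ≤ ∑' k : ℤ, ENNReal.ofReal (Φ (l ^ (k + 1))) * (ENNReal.ofReal (2 * 5 ^ n / l ^ k) *
          ∫⁻ z in {z | ENNReal.ofReal (l ^ k / 2) < g z}, g z) := by
        gcongr with k
        exact hvol k
    _ = ∫⁻ z, ∑' k : ℤ, ENNReal.ofReal (Φ (l ^ (k + 1))) * (ENNReal.ofReal (2 * 5 ^ n / l ^ k) *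
          {z | ENNReal.ofReal (l ^ k / 2) < g z}.indicator g z) := by
        rw [lintegral_tsum fun k =>
          (((hgm.indicator (hSm k)).const_mul _).const_mul _).aemeasurable]
        congr 1
        ext k
        rw [lintegral_const_mul _ ((hgm.indicator (hSm k)).const_mul _),
          lintegral_const_mul _ (hgm.indicator (hSm k)), lintegral_indicator (hSm k)]
    _ ≤ ∫⁻ x, ENNReal.ofReal (Φ (4 * 5 ^ n * l * |f x|)) := by
        refine lintegral_mono fun z => ?_
        have hgz : g z ≠ ⊤ := ne_top_of_le_ne_top ENNReal.ofReal_ne_top (hgf z)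
        obtain ⟨G, hG0, hG⟩ : ∃ G : ℝ, 0 ≤ G ∧ g z = ENNReal.ofReal G :=
          ⟨(g z).toReal, ENNReal.toReal_nonneg, (ENNReal.ofReal_toReal hgz).symm⟩
        have hGf : G ≤ |f z| := by
          have := hgf z
          rwa [hG, ENNReal.ofReal_le_ofReal_iff (abs_nonneg _)] at this
        rcases hG0.eq_or_lt with rfl | hGpos
        · simp [indicator, hG]
        have hterm (k : ℤ) : ENNReal.ofReal (Φ (l ^ (k + 1))) *
              (ENNReal.ofReal (2 * 5 ^ n / l ^ k) *
                {z | ENNReal.ofReal (l ^ k / 2) < g z}.indicator g z)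
            = ENNReal.ofReal (2 * 5 ^ n * G) *
              (if l ^ k < 2 * G then ENNReal.ofReal (Φ (l ^ (k + 1)) / l ^ k) else 0) := by
          have hp : 0 < l ^ k := zpow_pos hl0 k
          have hΦp : 0 ≤ Φ (l ^ (k + 1)) := hnonneg _ (zpow_pos hl0 _).le
          have hiff : z ∈ {z | ENNReal.ofReal (l ^ k / 2) < g z} ↔ l ^ k < 2 * G := by
            rw [mem_ofPred_eq, hG, ENNReal.ofReal_lt_ofReal_iff hGpos, div_lt_iff₀' two_pos]
          by_cases hk : l ^ k < 2 * G
          · rw [if_pos hk, indicator_of_mem (hiff.2 hk), hG,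
              ← ENNReal.ofReal_mul (by positivity), ← ENNReal.ofReal_mul hΦp,
              ← ENNReal.ofReal_mul (by positivity)]
            congr 1
            field_simp
          · rw [if_neg hk, indicator_of_notMem (mt hiff.1 hk)]
            simp
        simp_rw [hterm, ENNReal.tsum_mul_left]
        refine (mul_le_mul_right (tsum_zpow_le_of_nabla_two hΦ0 hconv hl hnabla2
          (by positivity : 0 < 2 * G)) _).trans ?_
        rw [← ENNReal.ofReal_mul (by positivity)]
        refine ENNReal.ofReal_le_ofReal ?_
        have h5 : (1 : ℝ) ≤ 5 ^ n := one_le_pow₀ (by norm_num)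
        calc 2 * 5 ^ n * G * (2 * Φ (l * (2 * G)) / (2 * G))
            = (2 * 5 ^ n) * Φ (l * (2 * G)) := by field_simp
          _ ≤ Φ ((2 * 5 ^ n) * (l * (2 * G))) :=
              mul_le_convexOn_apply_mul hΦ0 hconv (by linarith) (by positivity)
          _ ≤ Φ (4 * 5 ^ n * l * |f z|) := by
              refine hmono (mem_Ici.2 (by positivity)) (mem_Ici.2 (by positivity)) ?_
              calc _ = 4 * 5 ^ n * l * G := by ring
                _ ≤ _ := by gcongr

lemma MemOrlicz.nonempty_luxNorm_set {n : ℕ} {Φ : ℝ → ℝ} (hΦ0 : Φ 0 = 0)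
    (hconv : ConvexOn ℝ (Ici 0) Φ)
    {f : EuclideanSpace ℝ (Fin n) → ℝ} (hf : MemOrlicz Φ f) :
    {lam : ℝ | 0 < lam ∧ ∫⁻ x, ENNReal.ofReal (Φ (|f x| / lam)) ≤ 1}.Nonempty := by
  obtain ⟨lam, hlam, hfin⟩ := hf
  set I := ∫⁻ x, ENNReal.ofReal (Φ (|f x| / lam)) with hI
  have hc : 0 < I.toReal + 1 := by positivity
  have hc' : (I.toReal + 1)⁻¹ ≤ 1 := inv_le_one_of_one_le₀ (by simp)
  refine ⟨(I.toReal + 1) * lam, by positivity, ?_⟩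
  calc ∫⁻ x, ENNReal.ofReal (Φ (|f x| / ((I.toReal + 1) * lam)))
      ≤ ∫⁻ x, ENNReal.ofReal (I.toReal + 1)⁻¹ * ENNReal.ofReal (Φ (|f x| / lam)) := by
        refine lintegral_mono fun x => ?_
        rw [← ENNReal.ofReal_mul (by positivity)]
        refine ENNReal.ofReal_le_ofReal ?_
        have := convexOn_apply_mul_le hΦ0 hconv (by positivity) hc'
          (by positivity : 0 ≤ |f x| / lam)
        convert this using 2
        field_simp
    _ = ENNReal.ofReal (I.toReal + 1)⁻¹ * I := lintegral_const_mul' _ _ ENNReal.ofReal_ne_top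
    _ ≤ 1 := by
        rw [← ENNReal.ofReal_toReal hfin.ne, ENNReal.toReal_ofReal ENNReal.toReal_nonneg,
          ← ENNReal.ofReal_mul (by positivity), ← ENNReal.ofReal_one]
        refine ENNReal.ofReal_le_ofReal ?_
        rw [inv_mul_le_iff₀ hc]
        linarith

/-- if the Young function Φ satisfies the ∇2-condition, the
Hardy–Littlewood maximal operator is of strong (Φ,Φ)-type:
∫ Φ(Mf) ≤ ∫ Φ(C|f|) for all f ∈ L^Φ(ℝⁿ), and hence ‖Mf‖_{L^Φ} ≤ C‖f‖_{L^Φ}. -/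
theorem stmt_19 (n : ℕ) (Φ : ℝ → ℝ)
    (hΦ0 : Φ 0 = 0)
    (hnonneg : ∀ t, 0 ≤ t → 0 ≤ Φ t)
    (hmono : StrictMonoOn Φ (Set.Ici 0))
    (hconv : ConvexOn ℝ (Set.Ici 0) Φ)
    (hnabla2 : ∃ l : ℝ, 1 < l ∧ ∀ t > 0, 2 * l * Φ t ≤ Φ (l * t)) :
    ∃ C : ℝ, 0 < C ∧ ∀ f : EuclideanSpace ℝ (Fin n) → ℝ, MemOrlicz Φ f →
      (∫⁻ x, ENNReal.ofReal (Φ (hlMaximal f x)))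
          ≤ (∫⁻ x, ENNReal.ofReal (Φ (C * |f x|))) ∧
      luxNorm Φ (hlMaximal f) ≤ C * luxNorm Φ f := by
  obtain ⟨l, hl, hnabla⟩ := hnabla2
  have hl0 : 0 < l := by linarith
  have hmod := lintegral_hlMaximal_le (n := n) hΦ0 hnonneg hmono.monotoneOn hconv hl hnabla
  set C : ℝ := 4 * 5 ^ n * l with hC
  have hC0 : 0 < C := by positivity
  refine ⟨C, hC0, fun f hf => ⟨hmod f, ?_⟩⟩
  rw [← div_le_iff₀' hC0]
  refine le_csInf (hf.nonempty_luxNorm_set hΦ0 hconv) ?_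
  rintro lam ⟨hlam, hle⟩
  rw [div_le_iff₀' hC0]
  refine csInf_le ⟨0, fun _ h => h.1.le⟩ ⟨by positivity, ?_⟩
  have hscale := hmod fun z => (C * lam)⁻¹ * f z
  simp_rw [hlMaximal_const_mul f (by positivity : 0 ≤ (C * lam)⁻¹)] at hscale
  refine le_trans (le_of_eq ?_) (hscale.trans (le_trans (le_of_eq ?_) hle))
  · simp_rw [abs_of_nonneg (hlMaximal_nonneg f _), div_eq_inv_mul]
  · congr 1
    ext x
    rw [abs_mul, abs_of_pos (by positivity)]
    congr 2
    field_simp
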